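/- arXiv:1207.2815 — 2 statements merged into one kernel-verified Lean document; each statement's English description precedes it below -/
import Mathlib

section
/- ₃F₂(1/2,1/2,1/2; 1,3/2; 1) = 4G/π, where G is Catalan's constant. -/
/-!
The `n`-th term of the series is `aₙ² / (2n+1)` with `aₙ = ∏_{i<n} (2i+1)/(2i+2)`, because
`(1/2)ₙ / n! = aₙ` and `(1/2)ₙ / (3/2)ₙ = 1/(2n+1)`. By Wallis, `∫₀^{π/2} sin²ⁿ θ dθ = aₙ π/2`, and
integrating the binomial series of `(1 - x²)^(-1/2)` gives `arcsin s = ∑ aₙ s²ⁿ⁺¹ / (2n+1)` on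
`(0, 1)`. Putting `s = sin θ` and integrating termwise,

  `(π/2) ∑ aₙ² / (2n+1) = ∫₀^{π/2} θ / sin θ dθ`.

The substitution `θ = 2 arctan t` turns the right side into `∫₀¹ 2 arctan t / t dt`, which is `2G` by
termwise integration of the arctangent series. Each interchange of sum and integral is justified by
absolute summability of the integrals; for the integral of `θ / sin θ` this uses `aₙ² (2n+1) ≤ 1`.
The function `θ / sin θ` is written `(sinc θ)⁻¹`, which is continuous at `0`.
-/

open Real Finset

/-- Catalan's constant `G = ∑_{n=0}^∞ (−1)ⁿ/(2n+1)²`. -/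
noncomputable def catalanG : ℝ := ∑' n : ℕ, (-1 : ℝ) ^ n / (2 * (n : ℝ) + 1) ^ 2

/-- Pochhammer symbol `(a)ₙ = a(a+1)⋯(a+n−1) = Γ(a+n)/Γ(a)`. -/
noncomputable def poch (a : ℝ) (n : ℕ) : ℝ := ∏ i ∈ Finset.range n, (a + i)

/-- The generalized hypergeometric function `₃F₂(1/2,1/2,1/2; 1,3/2; z)`. -/
noncomputable def F32 (z : ℝ) : ℝ :=
  ∑' n : ℕ, (poch (1/2) n * poch (1/2) n * poch (1/2) n) /
      (poch 1 n * poch (3/2) n) * z ^ n / (n.factorial : ℝ)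

/-- The Wallis ratio `aₙ = (1/2)ₙ / n! = (1·3⋯(2n-1)) / (2·4⋯(2n))`. -/
noncomputable def wallisRatio (n : ℕ) : ℝ := ∏ i ∈ Finset.range n, (2 * (i : ℝ) + 1) / (2 * i + 2)

lemma wallisRatio_succ (n : ℕ) :
    wallisRatio (n + 1) = wallisRatio n * ((2 * (n : ℝ) + 1) / (2 * n + 2)) := by
  rw [wallisRatio, wallisRatio, Finset.prod_range_succ]

lemma wallisRatio_nonneg (n : ℕ) : 0 ≤ wallisRatio n :=
  Finset.prod_nonneg fun i _ => by positivity

lemma wallisRatio_sq_mul_le (n : ℕ) : wallisRatio n ^ 2 * (2 * n + 1) ≤ 1 := by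
  induction n with
  | zero => simp [wallisRatio]
  | succ k ih =>
    rw [wallisRatio_succ]
    have h : ((2 * (k : ℝ) + 1) * (2 * k + 3)) / (2 * k + 2) ^ 2 ≤ 1 := by
      rw [div_le_one (by positivity)]
      nlinarith
    calc (wallisRatio k * ((2 * (k : ℝ) + 1) / (2 * k + 2))) ^ 2 * (2 * ((k + 1 : ℕ) : ℝ) + 1)
        = (wallisRatio k ^ 2 * (2 * k + 1)) *
            (((2 * (k : ℝ) + 1) * (2 * k + 3)) / (2 * k + 2) ^ 2) := by
          push_cast
          field_simp
          ring
      _ ≤ 1 := mul_le_one₀ ih (by positivity) h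

lemma wallisRatio_le_one (n : ℕ) : wallisRatio n ≤ 1 := by
  have h := wallisRatio_sq_mul_le n
  have h2 : wallisRatio n ^ 2 ≤ wallisRatio n ^ 2 * (2 * n + 1) :=
    le_mul_of_one_le_right (sq_nonneg _) (by linarith [Nat.cast_nonneg (α := ℝ) n])
  nlinarith [wallisRatio_nonneg n]

lemma poch_succ (a : ℝ) (n : ℕ) : poch a (n + 1) = poch a n * (a + n) := by
  simp [poch, Finset.prod_range_succ]

lemma poch_one (n : ℕ) : poch 1 n = n.factorial := by
  induction n with
  | zero => simp [poch]
  | succ k ih => rw [poch_succ, ih, Nat.factorial_succ]; push_cast; ring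

lemma poch_half (n : ℕ) : poch (1 / 2) n = wallisRatio n * n.factorial := by
  induction n with
  | zero => simp [poch, wallisRatio]
  | succ k ih =>
    rw [poch_succ, ih, wallisRatio_succ, Nat.factorial_succ]
    push_cast
    field_simp
    ring

lemma poch_three_half (n : ℕ) : poch (3 / 2) n = poch (1 / 2) n * (2 * n + 1) := by
  induction n with
  | zero => simp [poch]
  | succ k ih =>
    rw [poch_succ, ih, poch_succ]
    push_cast
    ring

lemma poch_half_pos (n : ℕ) : 0 < poch (1 / 2) n :=
  Finset.prod_pos fun i _ => by positivity

lemma F32_term (n : ℕ) :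
    (poch (1/2) n * poch (1/2) n * poch (1/2) n) /
      (poch 1 n * poch (3/2) n) * 1 ^ n / (n.factorial : ℝ) = wallisRatio n ^ 2 / (2 * n + 1) := by
  have h := (poch_half_pos n).ne'
  have hf : (n.factorial : ℝ) ≠ 0 := by positivity
  have hn : (2 * (n : ℝ) + 1) ≠ 0 := by positivity
  have hw : wallisRatio n = poch (1 / 2) n / n.factorial := by
    rw [poch_half]; field_simp
  rw [poch_three_half, poch_one, hw]
  field_simp
  simp

/-- The coefficients of the binomial series of `(1 - y)^(-1/2)` are the Wallis ratios. -/
lemma choose_half (n : ℕ) : Ring.choose ((1 / 2 : ℝ) + n - 1) n = wallisRatio n := by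
  rw [← Ring.multichoose_eq]
  have h := Ring.factorial_nsmul_multichoose_eq_ascPochhammer (1 / 2 : ℝ) n
  have h2 : (ascPochhammer ℕ n).smeval (1 / 2 : ℝ) = poch (1 / 2) n := by
    rw [Polynomial.ascPochhammer_smeval_eq_eval]
    induction n with
    | zero => simp [poch]
    | succ k ih =>
      rw [ascPochhammer_succ_eval, poch_succ, ih]
      exact Ring.factorial_nsmul_multichoose_eq_ascPochhammer (1 / 2 : ℝ) k
  rw [h2, poch_half, nsmul_eq_mul, mul_comm] at h
  exact mul_right_cancel₀ (by positivity) h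

lemma hasSum_inv_sqrt {x : ℝ} (h0 : 0 ≤ x) (h1 : x < 1) :
    HasSum (fun n => wallisRatio n * x ^ (2 * n)) (1 / √(1 - x ^ 2)) := by
  have hx : x ^ 2 < 1 := by nlinarith
  have h := (Real.one_div_one_sub_rpow_hasFPowerSeriesOnBall_zero (1 / 2)).hasSum
    (y := x ^ 2) (by
      rw [← ENNReal.ofReal_one, Metric.eball_ofReal]
      simpa [abs_of_nonneg h0] using h1)
  simp only [FormalMultilinearSeries.ofScalars_apply_eq, choose_half, zero_add, smul_eq_mul,
    ← pow_mul, ← Real.sqrt_eq_rpow] at h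
  exact h

/-- Termwise integration over a compact interval. The pointwise sum is only required on the open
interval, so that endpoint singularities (and junk values there) do not matter. -/
lemma hasSum_intervalIntegral {a b : ℝ} (hab : a ≤ b) {F : ℕ → ℝ → ℝ} {f : ℝ → ℝ}
    (hF : ∀ n, Continuous (F n)) (hs : Summable fun n => ∫ x in a..b, |F n x|)
    (h : ∀ x ∈ Set.Ioo a b, HasSum (fun n => F n x) (f x)) :
    HasSum (fun n => ∫ x in a..b, F n x) (∫ x in a..b, f x) := by
  simp only [intervalIntegral.integral_of_le hab, MeasureTheory.integral_Ioc_eq_integral_Ioo]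
    at hs ⊢
  have key := MeasureTheory.hasSum_integral_of_summable_integral_norm
    (μ := MeasureTheory.volume.restrict (Set.Ioo a b)) (F := F)
    (fun n => ((hF n).integrableOn_Icc (a := a) (b := b)).mono_set Set.Ioo_subset_Icc_self)
    (by simpa only [Real.norm_eq_abs] using hs)
  rwa [MeasureTheory.setIntegral_congr_fun measurableSet_Ioo
    (fun x hx => (h x hx).tsum_eq)] at key

lemma hasSum_arcsin {s : ℝ} (h0 : 0 ≤ s) (h1 : s < 1) :
    HasSum (fun n => wallisRatio n * (s ^ (2 * n + 1) / (2 * n + 1))) (arcsin s) := by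
  have hI : ∀ n : ℕ, ∫ x in (0 : ℝ)..s, wallisRatio n * x ^ (2 * n)
      = wallisRatio n * (s ^ (2 * n + 1) / (2 * n + 1)) := by
    intro n
    rw [intervalIntegral.integral_const_mul, integral_pow]
    simp
  have hA : ∀ n : ℕ, ∫ x in (0 : ℝ)..s, |wallisRatio n * x ^ (2 * n)|
      = wallisRatio n * (s ^ (2 * n + 1) / (2 * n + 1)) := by
    intro n
    rw [← hI]
    congr 1
    ext x
    rw [abs_of_nonneg (mul_nonneg (wallisRatio_nonneg n) (by rw [pow_mul]; positivity))]
  have h_arcsin : ∫ x in (0 : ℝ)..s, 1 / √(1 - x ^ 2) = arcsin s := by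
    have hlt : ∀ x ∈ Set.uIcc 0 s, 0 ≤ x ∧ x < 1 := by
      intro x hx
      rw [Set.uIcc_of_le h0] at hx
      exact ⟨hx.1, hx.2.trans_lt h1⟩
    rw [intervalIntegral.integral_eq_sub_of_hasDerivAt (f := arcsin)]
    · simp
    · intro x hx
      exact hasDerivAt_arcsin (by linarith [(hlt x hx).1]) (hlt x hx).2.ne
    · apply ContinuousOn.intervalIntegrable
      apply ContinuousOn.div (by fun_prop) (by fun_prop)
      intro x hx
      have := hlt x hx
      exact (Real.sqrt_pos.2 (by nlinarith)).ne'
  have key := hasSum_intervalIntegral h0 (F := fun n x => wallisRatio n * x ^ (2 * n))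
    (f := fun x => 1 / √(1 - x ^ 2)) (fun n => by fun_prop) ?_
    (fun x hx => hasSum_inv_sqrt hx.1.le (hx.2.trans h1))
  · simpa only [hI, h_arcsin] using key
  · simp only [hA]
    refine Summable.of_nonneg_of_le
      (fun n => mul_nonneg (wallisRatio_nonneg n) (by positivity)) (fun n => ?_)
      (summable_geometric_of_lt_one h0 h1)
    calc wallisRatio n * (s ^ (2 * n + 1) / (2 * n + 1)) ≤ 1 * (s ^ n / 1) := by
          refine mul_le_mul ?_ (div_le_div₀ (by positivity) ?_ one_pos ?_) (by positivity) zero_le_one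
          · exact wallisRatio_le_one n
          · exact pow_le_pow_of_le_one h0 h1.le (show n ≤ 2 * n + 1 by omega)
          · linarith [Nat.cast_nonneg (α := ℝ) n]
      _ = s ^ n := by simp

lemma integral_sin_pow_even_half (n : ℕ) :
    ∫ x in (0 : ℝ)..π / 2, sin x ^ (2 * n) = wallisRatio n * (π / 2) := by
  have h := intervalIntegral.integral_comp_sub_left (a := 0) (b := π / 2)
    (fun x => sin x ^ (2 * n)) (π / 2)
  simp only [sin_pi_div_two_sub, sub_self, sub_zero] at h
  rw [← h, EulerSine.integral_cos_pow_eq, integral_sin_pow_even, wallisRatio]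
  ring

lemma summable_one_div_odd_sq : Summable fun n : ℕ => 1 / (2 * (n : ℝ) + 1) ^ 2 := by
  have h := (Real.summable_one_div_nat_pow (p := 2)).2 (by norm_num)
  have h2 := h.comp_injective (i := fun n : ℕ => 2 * n + 1) (fun a b hab => by
    simp only at hab; omega)
  refine h2.congr fun n => ?_
  simp

/-- `∑ aₙ² / (2n+1) · π/2 = ∫₀^{π/2} θ / sin θ dθ`: the arcsine series at `sin θ`, divided by `sin θ`
and integrated termwise. -/
lemma hasSum_wallis_integral :
    HasSum (fun n : ℕ => wallisRatio n ^ 2 / (2 * n + 1) * (π / 2))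
      (∫ x in (0 : ℝ)..π / 2, (sinc x)⁻¹) := by
  have hI : ∀ n : ℕ, ∫ x in (0 : ℝ)..π / 2, wallisRatio n / (2 * n + 1) * sin x ^ (2 * n)
      = wallisRatio n ^ 2 / (2 * n + 1) * (π / 2) := by
    intro n
    rw [intervalIntegral.integral_const_mul, integral_sin_pow_even_half]
    ring
  have hA : ∀ n : ℕ, ∫ x in (0 : ℝ)..π / 2, |wallisRatio n / (2 * n + 1) * sin x ^ (2 * n)|
      = wallisRatio n ^ 2 / (2 * n + 1) * (π / 2) := by
    intro n
    rw [← hI]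
    congr 1
    ext x
    have := wallisRatio_nonneg n
    rw [abs_of_nonneg (mul_nonneg (by positivity) (by rw [pow_mul]; positivity))]
  have key := hasSum_intervalIntegral (a := 0) (b := π / 2) (by positivity)
    (F := fun n x => wallisRatio n / (2 * n + 1) * sin x ^ (2 * n))
    (f := fun x => (sinc x)⁻¹) (fun n => by fun_prop) ?_ ?_
  · simpa only [hI] using key
  · simp only [hA]
    refine Summable.mul_right _ ?_
    refine Summable.of_nonneg_of_le (fun n => by positivity) (fun n => ?_) summable_one_div_odd_sq
    rw [div_le_div_iff₀ (by positivity) (by positivity)]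
    nlinarith [wallisRatio_sq_mul_le n, Nat.cast_nonneg (α := ℝ) n]
  · intro x hx
    have hs : 0 < sin x := sin_pos_of_pos_of_lt_pi hx.1 (by linarith [hx.2, pi_pos])
    have hs1 : sin x < 1 := by
      rw [← sin_pi_div_two]
      exact sin_lt_sin_of_lt_of_le_pi_div_two (by linarith [hx.1, pi_pos]) le_rfl hx.2
    have h := (hasSum_arcsin hs.le hs1).mul_right (sin x)⁻¹
    rw [arcsin_sin (by linarith [hx.1, pi_pos]) hx.2.le] at h
    rw [sinc_of_ne_zero hx.1.ne', inv_div, div_eq_mul_inv]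
    refine (congrArg (HasSum · _) (funext fun n => ?_)).mpr h
    field_simp
    ring

/-- The substitution `θ = 2 arctan t`, under which `sin θ = 2t / (1 + t²)`. -/
lemma integral_inv_sinc :
    ∫ x in (0 : ℝ)..π / 2, (sinc x)⁻¹ = ∫ t in (0 : ℝ)..1, 2 * (arctan t / t) := by
  have h := intervalIntegral.integral_comp_mul_deriv' (a := 0) (b := 1)
    (f := fun t => 2 * arctan t) (f' := fun t => 2 * (1 / (1 + t ^ 2))) (g := fun x => (sinc x)⁻¹)
    (fun x _ => (hasDerivAt_arctan x).const_mul 2)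
    (Continuous.continuousOn (continuous_const.mul (continuous_const.div (by fun_prop)
      fun x => by positivity)))
    (by
      refine continuous_sinc.continuousOn.inv₀ ?_
      rintro _ ⟨t, ht, rfl⟩
      rw [Set.uIcc_of_le zero_le_one] at ht
      rcases ht.1.eq_or_lt with h0 | h0
      · simp [← h0]
      · have h2 : 0 < arctan t := arctan_pos.2 h0
        have hpos : 0 < 2 * arctan t := by linarith
        dsimp only
        rw [sinc_of_ne_zero hpos.ne']
        exact (div_pos (sin_pos_of_pos_of_lt_pi hpos
          (by linarith [arctan_lt_pi_div_two t])) hpos).ne')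
  have e : 2 * arctan 1 = π / 2 := by rw [arctan_one]; ring
  simp only [arctan_zero, mul_zero, e] at h
  rw [← h]
  refine intervalIntegral.integral_congr_ae (MeasureTheory.ae_of_all _ fun t ht => ?_)
  rw [Set.uIoc_of_le zero_le_one] at ht
  have ht0 : 0 < t := ht.1
  have h2 : 0 < arctan t := arctan_pos.2 ht0
  have hsin : sin (2 * arctan t) = 2 * t / (1 + t ^ 2) := by
    have hc := cos_sq_arctan t
    have hcp := (cos_arctan_pos t).ne'
    have ht' : sin (arctan t) = t * cos (arctan t) := by
      have := tan_arctan t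
      rw [tan_eq_sin_div_cos, div_eq_iff hcp] at this
      exact this
    rw [sin_two_mul, ht']
    calc 2 * (t * cos (arctan t)) * cos (arctan t) = 2 * t * cos (arctan t) ^ 2 := by ring
      _ = 2 * t / (1 + t ^ 2) := by rw [hc]; ring
  simp only [Function.comp]
  rw [sinc_of_ne_zero (by positivity), hsin]
  field_simp

lemma hasSum_arctan_integral :
    HasSum (fun n : ℕ => 2 * ((-1 : ℝ) ^ n / (2 * (n : ℝ) + 1) ^ 2))
      (∫ t in (0 : ℝ)..1, 2 * (arctan t / t)) := by
  have hI : ∀ n : ℕ, ∫ t in (0 : ℝ)..1, 2 * ((-1 : ℝ) ^ n / (2 * n + 1)) * t ^ (2 * n)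
      = 2 * ((-1 : ℝ) ^ n / (2 * (n : ℝ) + 1) ^ 2) := by
    intro n
    rw [intervalIntegral.integral_const_mul, integral_pow]
    simp
    field_simp
  have hA : ∀ n : ℕ, ∫ t in (0 : ℝ)..1, |2 * ((-1 : ℝ) ^ n / (2 * n + 1)) * t ^ (2 * n)|
      = 2 * (1 / (2 * (n : ℝ) + 1) ^ 2) := by
    intro n
    have : ∀ t : ℝ, |2 * ((-1 : ℝ) ^ n / (2 * n + 1)) * t ^ (2 * n)|
        = 2 * (1 / (2 * n + 1)) * t ^ (2 * n) := by
      intro t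
      have h1 : |(2 * (n : ℝ) + 1)| = 2 * n + 1 := abs_of_nonneg (by positivity)
      have h2 : |t ^ (2 * n)| = t ^ (2 * n) := abs_of_nonneg (by rw [pow_mul]; positivity)
      rw [abs_mul, abs_mul, abs_div, h1, h2]
      simp
    simp only [this]
    rw [intervalIntegral.integral_const_mul, integral_pow]
    simp
    field_simp
  have key := hasSum_intervalIntegral (a := 0) (b := 1) zero_le_one
    (F := fun n t => 2 * ((-1 : ℝ) ^ n / (2 * n + 1)) * t ^ (2 * n))
    (f := fun t => 2 * (arctan t / t)) (fun n => by fun_prop) ?_ ?_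
  · simpa only [hI] using key
  · simp only [hA]
    exact summable_one_div_odd_sq.mul_left 2
  · intro t ht
    have h := ((Real.hasSum_arctan (x := t) (by
      rw [Real.norm_eq_abs, abs_of_pos ht.1]; exact ht.2)).mul_right t⁻¹).mul_left 2
    have ht0 : t ≠ 0 := ht.1.ne'
    rw [div_eq_mul_inv]
    refine (congrArg (HasSum · _) (funext fun n => ?_)).mpr h
    push_cast
    field_simp
    ring

theorem hypergeom_3F2_eq_catalan : F32 1 = 4 * catalanG / π := by
  have h1 := hasSum_wallis_integral.tsum_eq
  rw [integral_inv_sinc, ← hasSum_arctan_integral.tsum_eq, tsum_mul_right, tsum_mul_left] at h1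
  have hF : F32 1 = ∑' n : ℕ, wallisRatio n ^ 2 / (2 * n + 1) := by
    unfold F32
    exact tsum_congr F32_term
  rw [hF, eq_div_iff pi_ne_zero, catalanG]
  linarith
end

section
/- For all real z with 0 < z ≤ 1, the square lattice spanning tree generating function satisfies log 4 + (1/(4π²)) ∫_{-π}^{π} ∫_{-π}^{π} log(1/z − (1/2)(cos k₁ + cos k₂)) dk₁ dk₂ = log 4 − log z − (z²/8)·₄F₃(1,1,3/2,3/2; 2,2,2; z²). -/
/-!
Write `c = (cos k₁ + cos k₂) / 2`. Then `log (1/z - c) = -log z - ∑_{n ≥ 1} (z c)^n / n`, and the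
theorem follows by integrating term by term. The odd moments of `c` over the torus vanish; the
binomial theorem, the one-dimensional moments of the cosine and Vandermonde's identity
`∑ C(m, i)² = C(2m, m)` show that the mean of `c^(2m)` is `(C(2m, m) / 4^m)²`
(`integral_innerMoment_even`). These squares are the coefficients of the `₄F₃`, up to the elementary
factors computed in `poch_three_halves` and its companions.

Termwise integration is carried out one variable at a time. For fixed `k₁` with `|cos k₁| < 1` the
series is dominated by a geometric one (`hasSum_inner`). In the outer variable the integral of
`|∫ c^n dk₂|` is at most `4π² / n`, since `(C(2m, m) / 4^m)² ≤ 1 / (2m + 1)`; so the terms are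
absolutely summable up to and including `z = 1` (`hasSum_outer`).
-/

open Real Finset

/-- The generalized hypergeometric function `₄F₃(1,1,3/2,3/2; 2,2,2; z)`. -/
noncomputable def F43 (z : ℝ) : ℝ :=
  ∑' n : ℕ, (poch 1 n * poch 1 n * poch (3/2) n * poch (3/2) n) /
      (poch 2 n * poch 2 n * poch 2 n) * z ^ n / (n.factorial : ℝ)

/-! ### The coefficients `C(2m, m) / 4^m` -/

/-- `C(2m, m) / 4^m`, the mean value of `cos ^ (2m)` over a period. -/
noncomputable def cosMean (m : ℕ) : ℝ := (Nat.centralBinom m : ℝ) / 4 ^ m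

lemma cosMean_zero : cosMean 0 = 1 := by simp [cosMean]

lemma cosMean_succ (m : ℕ) : cosMean (m + 1) = (2 * m + 1) / (2 * m + 2) * cosMean m := by
  have h : ((m : ℝ) + 1) * (Nat.centralBinom (m + 1) : ℝ)
      = 2 * (2 * m + 1) * Nat.centralBinom m := by
    exact_mod_cast Nat.succ_mul_centralBinom_succ m
  have hm : (m : ℝ) + 1 ≠ 0 := by positivity
  have h2 : (Nat.centralBinom (m + 1) : ℝ) = 2 * (2 * m + 1) * Nat.centralBinom m / (m + 1) := by
    rw [eq_div_iff hm, ← h]; ring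
  unfold cosMean
  rw [h2, pow_succ]
  field_simp
  ring

/-- The decay of the coefficients that makes the series converge absolutely up to `z = 1`. -/
lemma cosMean_sq_le (m : ℕ) : cosMean m ^ 2 * (2 * m + 1) ≤ 1 := by
  induction m with
  | zero => simp [cosMean_zero]
  | succ m ih =>
    rw [cosMean_succ]
    push_cast
    have h : ((2 * (m : ℝ) + 1) / (2 * m + 2) * cosMean m) ^ 2 * (2 * (m + 1) + 1)
        = (cosMean m ^ 2 * (2 * m + 1)) * (((2 * m + 1) * (2 * m + 3)) / (2 * m + 2) ^ 2) := by
      field_simp; ring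
    rw [h]
    refine mul_le_one₀ ih (by positivity) ?_
    rw [div_le_one (by positivity)]
    nlinarith

/-! ### Moments of the cosines -/

lemma integral_cos_pow_add_two (n : ℕ) :
    ∫ x in (-π)..π, cos x ^ (n + 2) = (n + 1) / (n + 2) * ∫ x in (-π)..π, cos x ^ n := by
  rw [integral_cos_pow]; simp

lemma integral_cos_pow_even_period (m : ℕ) :
    ∫ x in (-π)..π, cos x ^ (2 * m) = 2 * π * cosMean m := by
  induction m with
  | zero => simp [cosMean_zero]; ring
  | succ m ih =>
    rw [show 2 * (m + 1) = 2 * m + 2 by ring, integral_cos_pow_add_two, ih, cosMean_succ]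
    push_cast; ring

lemma integral_cos_pow_odd_period (m : ℕ) :
    ∫ x in (-π)..π, cos x ^ (2 * m + 1) = 0 := by
  induction m with
  | zero => simp
  | succ m ih =>
    rw [show 2 * (m + 1) + 1 = 2 * m + 1 + 2 by ring, integral_cos_pow_add_two, ih, mul_zero]

/-- The inner moment `∫ ((cos k + cos t) / 2) ^ n dt`. -/
noncomputable def innerMoment (n : ℕ) (k : ℝ) : ℝ :=
  ∫ t in (-π)..π, ((1/2) * (cos k + cos t)) ^ n

lemma continuous_innerMoment (n : ℕ) : Continuous (innerMoment n) := by
  unfold innerMoment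
  exact intervalIntegral.continuous_parametric_intervalIntegral_of_continuous' (by fun_prop) _ _

lemma integral_innerMoment (n : ℕ) :
    ∫ k in (-π)..π, innerMoment n k = (1/2) ^ n * ∑ j ∈ Finset.range (n + 1),
      (∫ x in (-π)..π, cos x ^ j) * (∫ x in (-π)..π, cos x ^ (n - j)) * (n.choose j : ℝ) := by
  have h1 : ∀ k, innerMoment n k = (1/2) ^ n * ∑ j ∈ Finset.range (n + 1),
      cos k ^ j * ((∫ x in (-π)..π, cos x ^ (n - j)) * (n.choose j : ℝ)) := by
    intro k
    unfold innerMoment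
    simp_rw [mul_pow, add_pow]
    rw [intervalIntegral.integral_const_mul, intervalIntegral.integral_finsetSum]
    · congr 1
      refine Finset.sum_congr rfl fun j _ => ?_
      rw [intervalIntegral.integral_mul_const, intervalIntegral.integral_const_mul, mul_assoc]
    · intro j _
      exact Continuous.intervalIntegrable (by fun_prop) _ _
  simp_rw [h1]
  rw [intervalIntegral.integral_const_mul, intervalIntegral.integral_finsetSum]
  · congr 1
    refine Finset.sum_congr rfl fun j _ => ?_
    rw [intervalIntegral.integral_mul_const, mul_assoc]
  · intro j _
    exact Continuous.intervalIntegrable (by fun_prop) _ _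

lemma integral_innerMoment_odd (m : ℕ) :
    ∫ k in (-π)..π, innerMoment (2 * m + 1) k = 0 := by
  rw [integral_innerMoment, Finset.sum_eq_zero, mul_zero]
  intro j hj
  have hj' : j ≤ 2 * m + 1 := by simpa [Nat.lt_succ_iff] using hj
  rcases Nat.even_or_odd' j with ⟨i, rfl | rfl⟩
  · rw [show 2 * m + 1 - 2 * i = 2 * (m - i) + 1 by omega, integral_cos_pow_odd_period]
    simp
  · rw [integral_cos_pow_odd_period]
    simp

lemma sum_range_even_of_odd_zero (f : ℕ → ℝ) (hf : ∀ i, f (2 * i + 1) = 0) (m : ℕ) :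
    ∑ j ∈ Finset.range (2 * m + 1), f j = ∑ i ∈ Finset.range (m + 1), f (2 * i) := by
  induction m with
  | zero => simp
  | succ m ih =>
    rw [show 2 * (m + 1) + 1 = 2 * m + 1 + 1 + 1 by ring, Finset.sum_range_succ,
      Finset.sum_range_succ, ih, hf, Finset.sum_range_succ _ (m + 1), add_zero]
    rfl

/-- Both sides are the multinomial coefficient `(2m)! / (i!² (m-i)!²)`. -/
lemma choose_mul_centralBinom (m i : ℕ) (hi : i ≤ m) :
    (Nat.centralBinom i : ℝ) * Nat.centralBinom (m - i) * ((2 * m).choose (2 * i) : ℝ)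
      = Nat.centralBinom m * (m.choose i : ℝ) ^ 2 := by
  obtain ⟨l, rfl⟩ := Nat.exists_eq_add_of_le hi
  simp only [Nat.centralBinom, Nat.add_sub_cancel_left]
  rw [Nat.cast_choose ℝ (show i ≤ 2 * i by omega), Nat.cast_choose ℝ (show l ≤ 2 * l by omega),
    Nat.cast_choose ℝ (show 2 * i ≤ 2 * (i + l) by omega),
    Nat.cast_choose ℝ (show i + l ≤ 2 * (i + l) by omega),
    Nat.cast_choose ℝ (show i ≤ i + l by omega),
    show 2 * i - i = i by omega, show 2 * l - l = l by omega,
    show 2 * (i + l) - 2 * i = 2 * l by omega, show 2 * (i + l) - (i + l) = i + l by omega,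
    show i + l - i = l by omega]
  have h : ∀ n : ℕ, (n.factorial : ℝ) ≠ 0 := fun n => by positivity
  have h1 := h i
  have h2 := h l
  have h3 := h (2 * i)
  have h4 := h (2 * l)
  have h5 := h (i + l)
  field_simp

lemma integral_innerMoment_even (m : ℕ) :
    ∫ k in (-π)..π, innerMoment (2 * m) k = 4 * π ^ 2 * cosMean m ^ 2 := by
  rw [integral_innerMoment, sum_range_even_of_odd_zero]
  · have h : ∀ i ∈ Finset.range (m + 1),
        (∫ x in (-π)..π, cos x ^ (2 * i)) * (∫ x in (-π)..π, cos x ^ (2 * m - 2 * i))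
          * ((2 * m).choose (2 * i) : ℝ)
        = 4 * π ^ 2 * (Nat.centralBinom m / 4 ^ m) * (m.choose i : ℝ) ^ 2 := by
      intro i hi
      have hi' : i ≤ m := by simpa [Nat.lt_succ_iff] using hi
      have h4 : (4 : ℝ) ^ i * 4 ^ (m - i) = 4 ^ m := by
        rw [← pow_add]; congr 1; omega
      rw [show 2 * m - 2 * i = 2 * (m - i) by omega, integral_cos_pow_even_period,
        integral_cos_pow_even_period]
      unfold cosMean
      calc _ = 4 * π ^ 2 * ((Nat.centralBinom i : ℝ) * Nat.centralBinom (m - i)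
              * ((2 * m).choose (2 * i) : ℝ)) / (4 ^ i * 4 ^ (m - i)) := by
            field_simp; ring
        _ = _ := by rw [choose_mul_centralBinom m i hi', h4]; ring
    rw [Finset.sum_congr rfl h, ← Finset.mul_sum]
    have h2 : ∑ i ∈ Finset.range (m + 1), (m.choose i : ℝ) ^ 2 = Nat.centralBinom m := by
      exact_mod_cast Nat.sum_range_choose_sq m
    rw [h2, pow_mul, show ((1:ℝ)/2) ^ 2 = 1 / 4 by norm_num, one_div_pow]
    unfold cosMean
    ring
  · intro i
    rw [integral_cos_pow_odd_period]
    simp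

lemma abs_half_cos_add_cos_le_one (k t : ℝ) : |(1/2) * (cos k + cos t)| ≤ 1 := by
  rw [abs_le]
  constructor <;> linarith [neg_one_le_cos k, neg_one_le_cos t, cos_le_one k, cos_le_one t]

lemma abs_innerMoment_le (n : ℕ) (k : ℝ) : |innerMoment n k| ≤ innerMoment (2 * (n / 2)) k := by
  unfold innerMoment
  refine (intervalIntegral.abs_integral_le_integral_abs (by linarith [pi_pos])).trans ?_
  refine intervalIntegral.integral_mono_on (by linarith [pi_pos])
    (Continuous.intervalIntegrable (by fun_prop) _ _)
    (Continuous.intervalIntegrable (by fun_prop) _ _) fun t _ => ?_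
  rw [abs_pow, pow_mul _ 2 (n / 2), ← sq_abs, ← pow_mul]
  exact pow_le_pow_of_le_one (abs_nonneg _) (abs_half_cos_add_cos_le_one k t) (by omega)

lemma integral_abs_innerMoment_le (n : ℕ) :
    ∫ k in (-π)..π, |innerMoment (n + 1) k| ≤ 4 * π ^ 2 / (n + 1) := by
  have h1 : ∫ k in (-π)..π, |innerMoment (n + 1) k|
      ≤ ∫ k in (-π)..π, innerMoment (2 * ((n + 1) / 2)) k :=
    intervalIntegral.integral_mono_on (by linarith [pi_pos])
      (Continuous.intervalIntegrable (continuous_innerMoment _).abs _ _)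
      (Continuous.intervalIntegrable (continuous_innerMoment _) _ _)
      fun k _ => abs_innerMoment_le _ k
  refine h1.trans ?_
  rw [integral_innerMoment_even]
  set m := (n + 1) / 2 with hm
  have h2 : (n : ℝ) + 1 ≤ 2 * m + 1 := by
    exact_mod_cast (show n + 1 ≤ 2 * m + 1 by omega)
  have h3 := cosMean_sq_le m
  rw [le_div_iff₀ (by positivity), mul_assoc]
  have h4 : cosMean m ^ 2 * ((n : ℝ) + 1) ≤ 1 :=
    (mul_le_mul_of_nonneg_left h2 (sq_nonneg _)).trans h3
  nlinarith [sq_nonneg π]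

/-! ### Termwise integration of the logarithmic series -/

/-- For `|cos k| < 1` the series of `log (1 - z c)` converges uniformly in the inner variable. -/
lemma hasSum_inner {z : ℝ} (hz0 : 0 < z) (hz1 : z ≤ 1) {k : ℝ} (hk : |cos k| < 1) :
    HasSum (fun n : ℕ => z ^ (n + 1) / (n + 1) * innerMoment (n + 1) k)
      (2 * π * -log z - ∫ t in (-π)..π, log (1 / z - (1/2) * (cos k + cos t))) := by
  set r : ℝ := (|cos k| + 1) / 2 with hr
  have hr0 : 0 ≤ r := by positivity
  have hr1 : r < 1 := by linarith
  have hc : ∀ t, |z * ((1/2) * (cos k + cos t))| ≤ r := by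
    intro t
    have h1 : |(1/2) * (cos k + cos t)| ≤ r := by
      rw [abs_mul, abs_of_pos (by norm_num : (0:ℝ) < 1/2)]
      have := abs_add_le (cos k) (cos t)
      have := abs_cos_le_one t
      linarith
    rw [abs_mul, abs_of_pos hz0]
    nlinarith [abs_nonneg ((1/2) * (cos k + cos t))]
  have key : HasSum (fun n : ℕ => ∫ t in (-π)..π, (z * ((1/2) * (cos k + cos t))) ^ (n + 1) / (n + 1))
      (∫ t in (-π)..π, -log (1 - z * ((1/2) * (cos k + cos t)))) := by
    refine intervalIntegral.hasSum_integral_of_dominated_convergence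
      (fun n _ => r ^ (n + 1)) (fun n => ?_) (fun n => ?_) ?_ ?_ ?_
    · exact Continuous.aestronglyMeasurable (by fun_prop)
    · refine Filter.Eventually.of_forall fun t _ => ?_
      rw [norm_div, norm_pow, Real.norm_eq_abs, Real.norm_eq_abs,
        abs_of_pos (by positivity : (0:ℝ) < n + 1)]
      have h1 : |z * ((1/2) * (cos k + cos t))| ^ (n + 1) ≤ r ^ (n + 1) :=
        pow_le_pow_left₀ (abs_nonneg _) (hc t) _
      refine (div_le_self (by positivity) ?_).trans h1
      have : (0:ℝ) ≤ n := by positivity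
      linarith
    · refine Filter.Eventually.of_forall fun t _ => ?_
      exact (summable_nat_add_iff 1).2 (summable_geometric_of_lt_one hr0 hr1)
    · exact intervalIntegrable_const
    · exact Filter.Eventually.of_forall fun t _ =>
        hasSum_pow_div_log_of_abs_lt_one ((hc t).trans_lt hr1)
  convert key using 1
  · funext n
    unfold innerMoment
    rw [← intervalIntegral.integral_const_mul]
    refine intervalIntegral.integral_congr fun t _ => ?_
    simp only [mul_pow]
    ring
  · have hpos : ∀ t, 0 < 1 - z * ((1/2) * (cos k + cos t)) := fun t => by
      linarith [(abs_le.1 (hc t)).2]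
    have hlog : ∀ t, log (1 / z - (1/2) * (cos k + cos t))
        = -log z + log (1 - z * ((1/2) * (cos k + cos t))) := by
      intro t
      rw [← log_inv, ← log_mul (inv_ne_zero hz0.ne') (hpos t).ne']
      congr 1
      field_simp
    have hcont : Continuous fun t => log (1 - z * ((1/2) * (cos k + cos t))) :=
      Continuous.log (by fun_prop) fun t => (hpos t).ne'
    simp_rw [hlog]
    rw [intervalIntegral.integral_add intervalIntegrable_const (hcont.intervalIntegrable _ _),
      intervalIntegral.integral_const, smul_eq_mul, intervalIntegral.integral_neg]
    ring

lemma ae_abs_cos_lt_one : ∀ᵐ k : ℝ, |cos k| < 1 := by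
  have hcount : {k : ℝ | sin k = 0}.Countable := by
    refine (Set.countable_range fun n : ℤ => (n : ℝ) * π).mono fun k hk => ?_
    obtain ⟨n, hn⟩ := sin_eq_zero_iff.1 hk
    exact ⟨n, hn⟩
  filter_upwards [hcount.ae_notMem MeasureTheory.volume] with k hk
  rw [← sq_lt_one_iff_abs_lt_one]
  have : 0 < sin k ^ 2 := by
    have : sin k ≠ 0 := hk
    positivity
  linarith [sin_sq_add_cos_sq k]

/-- Termwise integration in the outer variable. In the proof the constant coming from `log z` is put
at index `0` of an auxiliary series `G`, so that it never has to be split off an integral. -/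
lemma hasSum_outer {z : ℝ} (hz0 : 0 < z) (hz1 : z ≤ 1) :
    HasSum (fun n : ℕ => z ^ (n + 1) / (n + 1) * ∫ k in (-π)..π, innerMoment (n + 1) k)
      (4 * π ^ 2 * -log z - ∫ k in (-π)..π, ∫ t in (-π)..π,
        log (1 / z - (1/2) * (cos k + cos t))) := by
  have hpi : -π ≤ π := by linarith [pi_pos]
  let G : ℕ → ℝ → ℝ := fun n k => match n with
    | 0 => -(2 * π * -log z)
    | n + 1 => z ^ (n + 1) / ((n : ℝ) + 1) * innerMoment (n + 1) k
  have hG : ∀ n : ℕ, Continuous (G n) := by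
    intro n
    cases n with
    | zero => exact continuous_const
    | succ n => exact continuous_const.mul (continuous_innerMoment _)
  have hint : ∀ n : ℕ, MeasureTheory.Integrable (G n)
      (MeasureTheory.volume.restrict (Set.Ioc (-π) π)) := fun n =>
    (intervalIntegrable_iff_integrableOn_Ioc_of_le hpi).1 ((hG n).intervalIntegrable _ _)
  have hsum : Summable fun n : ℕ => ∫ k in Set.Ioc (-π) π, ‖G n k‖ := by
    rw [← summable_nat_add_iff 1]
    have hs : Summable fun n : ℕ => 4 * π ^ 2 * (1 / ((n : ℝ) + 1) ^ 2) := by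
      refine Summable.mul_left _ ?_
      have := (summable_nat_add_iff 1).2 (Real.summable_one_div_nat_pow.2 (by norm_num : 1 < 2))
      simpa using this
    refine Summable.of_nonneg_of_le (fun n => ?_) (fun n => ?_) hs
    · exact MeasureTheory.integral_nonneg fun k => norm_nonneg _
    · rw [← intervalIntegral.integral_of_le hpi]
      simp only [G, norm_mul, Real.norm_eq_abs]
      rw [intervalIntegral.integral_const_mul, abs_of_nonneg (by positivity)]
      have h1 := integral_abs_innerMoment_le n
      have h2 : z ^ (n + 1) / ((n : ℝ) + 1) ≤ 1 / (n + 1) := by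
        gcongr
        exact pow_le_one₀ hz0.le hz1
      calc _ ≤ 1 / ((n : ℝ) + 1) * (4 * π ^ 2 / (n + 1)) :=
            mul_le_mul h2 h1 (intervalIntegral.integral_nonneg hpi fun k _ => abs_nonneg _)
              (by positivity)
        _ = _ := by field_simp
  have key := MeasureTheory.hasSum_integral_of_summable_integral_norm hint hsum
  have hae : (fun k => ∑' n : ℕ, G n k)
      =ᵐ[MeasureTheory.volume.restrict (Set.Ioc (-π) π)]
      fun k => -∫ t in (-π)..π, log (1 / z - (1/2) * (cos k + cos t)) := by
    filter_upwards [MeasureTheory.ae_restrict_of_ae ae_abs_cos_lt_one] with k hk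
    refine HasSum.tsum_eq ?_
    rw [← hasSum_nat_add_iff' 1, Finset.sum_range_one]
    have h0 : (-∫ t in (-π)..π, log (1 / z - (1/2) * (cos k + cos t))) - G 0 k
        = 2 * π * -log z - ∫ t in (-π)..π, log (1 / z - (1/2) * (cos k + cos t)) := by
      simp only [G]
      ring
    rw [h0]
    exact hasSum_inner hz0 hz1 hk
  rw [MeasureTheory.integral_congr_ae hae, MeasureTheory.integral_neg,
    ← intervalIntegral.integral_of_le hpi, ← hasSum_nat_add_iff' 1] at key
  simp only [← intervalIntegral.integral_of_le hpi, Finset.sum_range_one, G,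
    intervalIntegral.integral_const_mul, intervalIntegral.integral_const, smul_eq_mul] at key
  have hval : ∀ I : ℝ, 4 * π ^ 2 * -log z - I = -I - (π - -π) * -(2 * π * -log z) :=
    fun I => by ring
  rw [hval]
  exact key

/-- The odd moments vanish, which leaves the even powers of `z`. -/
lemma hasSum_even {z : ℝ} (hz0 : 0 < z) (hz1 : z ≤ 1) :
    HasSum (fun m : ℕ => z ^ (2 * m + 2) / (2 * m + 2) * (4 * π ^ 2 * cosMean (m + 1) ^ 2))
      (4 * π ^ 2 * -log z - ∫ k in (-π)..π, ∫ t in (-π)..π,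
        log (1 / z - (1/2) * (cos k + cos t))) := by
  have hinj : Function.Injective fun m : ℕ => 2 * m + 1 := fun a b h => by
    simpa using h
  have h := (hinj.hasSum_iff (fun n hn => ?_)).2 (hasSum_outer hz0 hz1)
  · convert h using 1
    funext m
    simp only [Function.comp]
    rw [show 2 * m + 1 + 1 = 2 * (m + 1) by ring, integral_innerMoment_even]
    push_cast
    ring
  · rcases Nat.even_or_odd' n with ⟨i, rfl | rfl⟩
    · rw [integral_innerMoment_odd, mul_zero]
    · exact absurd ⟨i, rfl⟩ hn

lemma poch_two (n : ℕ) : poch 2 n = (n + 1) * n.factorial := by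
  induction n with
  | zero => simp [poch]
  | succ n ih => rw [poch_succ, ih, Nat.factorial_succ]; push_cast; ring

lemma poch_three_halves (n : ℕ) :
    poch (3/2) n = 2 * cosMean (n + 1) * ((n + 1) * n.factorial) := by
  induction n with
  | zero => simp [poch, cosMean_succ, cosMean_zero]
  | succ n ih =>
    rw [poch_succ, ih, cosMean_succ (n + 1), Nat.factorial_succ]
    push_cast
    field_simp
    ring

/-- The square lattice spanning tree generating function in hypergeometric form. -/
theorem square_lattice_STGF (z : ℝ) (hz0 : 0 < z) (hz1 : z ≤ 1) :
    Real.log 4 + (1 / (4 * π ^ 2)) *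
      ∫ k₁ in (-π)..π, (∫ k₂ in (-π)..π,
        Real.log (1 / z - (1/2) * (Real.cos k₁ + Real.cos k₂))) =
    Real.log 4 - Real.log z - (z ^ 2 / 8) * F43 (z ^ 2) := by
  have h := (hasSum_even hz0 hz1).tsum_eq
  have hF : z ^ 2 / 8 * F43 (z ^ 2) = 1 / (4 * π ^ 2) * ∑' m : ℕ,
      z ^ (2 * m + 2) / (2 * m + 2) * (4 * π ^ 2 * cosMean (m + 1) ^ 2) := by
    rw [F43, ← tsum_mul_left, ← tsum_mul_left]
    refine tsum_congr fun n => ?_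
    rw [poch_one, poch_two, poch_three_halves, ← pow_mul, pow_add]
    have h1 : (n.factorial : ℝ) ≠ 0 := by positivity
    field_simp
    ring
  rw [hF, h]
  field_simp
  ring
end
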